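/- For every k with 0 ≤ k ≤ p − 2, if h_{k+1} = h_k (equivalently, c(k + 1 + h_k) = h_k), then e_k ≥ e_{k+1}. (Proposition 4.8(i).) -/

import Mathlib

/-- The shifted h-index of order `k`: the largest `m` with `1 ≤ m ≤ p - k` and
`c (k + m) ≥ m` (the Hirsch h-index of the tail sequence `c (k+1), …, c p`).
Taken as the `sup` of the (finite) set of such `m`, which equals its maximum
when the set is nonempty and is `0` otherwise. -/
def hIdx (p : ℕ) (c : ℕ → ℕ) (k : ℕ) : ℕ :=
  ((Finset.Icc 1 (p - k)).filter (fun m => m ≤ c (k + m))).sup id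

/-- The shifted core sum `N_k = Σ_{j=k+1}^{k+h_k} c j`. -/
def coreSum (p : ℕ) (c : ℕ → ℕ) (k : ℕ) : ℕ :=
  ∑ j ∈ Finset.Icc (k + 1) (k + hIdx p c k), c j

/-- The shifted e-index `e_k = √(N_k − h_k²)`. -/
noncomputable def eIdx (p : ℕ) (c : ℕ → ℕ) (k : ℕ) : ℝ :=
  Real.sqrt ((coreSum p c k : ℝ) - (hIdx p c k : ℝ) ^ 2)

theorem sum_Icc_add_le_sum_Icc_add_of_antitoneOn {M : Type*} [AddCommMonoid M] [Preorder M]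
    [AddLeftMono M] {f : ℕ → M} {k l n : ℕ} (hkl : k ≤ l)
    (hf : AntitoneOn f (Set.Icc (k + 1) (l + n))) :
    ∑ j ∈ Finset.Icc (l + 1) (l + n), f j ≤ ∑ j ∈ Finset.Icc (k + 1) (k + n), f j := by
  simp only [← Finset.map_add_left_Icc, Finset.sum_map, addLeftEmbedding_apply]
  refine Finset.sum_le_sum fun i hi => ?_
  obtain ⟨one_le_i, i_le_n⟩ := Finset.mem_Icc.mp hi
  exact hf ⟨by omega, by omega⟩ ⟨by omega, by omega⟩ (by omega)

theorem hIdx_le_sub (p : ℕ) (c : ℕ → ℕ) (k : ℕ) : hIdx p c k ≤ p - k :=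
  Finset.sup_le fun _ hm => (Finset.mem_Icc.mp (Finset.mem_filter.mp hm).1).2

section EqualHIdx

variable {p k l : ℕ} {c : ℕ → ℕ}

theorem coreSum_le_coreSum_of_hIdx_eq (hc : AntitoneOn c (Set.Ioc k p)) (hkl : k ≤ l)
    (hlp : l ≤ p) (hh : hIdx p c l = hIdx p c k) : coreSum p c l ≤ coreSum p c k := by
  have core_end_le : l + hIdx p c k ≤ p := by
    have := hIdx_le_sub p c l
    omega
  rw [coreSum, coreSum, hh]
  exact sum_Icc_add_le_sum_Icc_add_of_antitoneOn hkl
    (hc.mono fun _ hj => ⟨hj.1, hj.2.trans core_end_le⟩)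

theorem stmt_5_general (hc : AntitoneOn c (Set.Ioc k p)) (hkl : k ≤ l) (hlp : l ≤ p)
    (hh : hIdx p c l = hIdx p c k) : eIdx p c l ≤ eIdx p c k := by
  have core_le : (coreSum p c l : ℝ) ≤ coreSum p c k :=
    mod_cast coreSum_le_coreSum_of_hIdx_eq hc hkl hlp hh
  rw [eIdx, eIdx, hh]
  exact Real.sqrt_le_sqrt (sub_le_sub_right core_le _)

end EqualHIdx

theorem stmt_5 (p : ℕ) (hp : 1 ≤ p) (c : ℕ → ℕ)
    (hmono : ∀ i j, 1 ≤ i → i ≤ j → j ≤ p → c j ≤ c i)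
    (hpos : ∀ j, 1 ≤ j → j ≤ p → 1 ≤ c j)
    (hzero : ∀ j, p < j → c j = 0)
    (k : ℕ) (hk : k + 2 ≤ p)
    (hh : hIdx p c (k + 1) = hIdx p c k) :
    eIdx p c (k + 1) ≤ eIdx p c k :=
  stmt_5_general (fun i hi j hj hij => hmono i j (Nat.one_le_of_lt hi.1) hij hj.2)
    k.le_succ (by omega) hh
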